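/- Suppose g(r) = o(e^{-c r}) as r → ∞ for some c > 0, and fix γ < 1 (γ > 0). Let δ_n denote the minimum vertex degree of G_n(r̂_n(γ)). Then almost surely δ_n → 0 as n → ∞ (equivalently, almost surely δ_n = 0 for all sufficiently large n). -/

import Mathlib

open MeasureTheory ProbabilityTheory Filter Set

noncomputable section

namespace RCM

/-- The toroidal metric on the unit cube. -/
def torusDist {d : ℕ} (x y : EuclideanSpace ℝ (Fin d)) : ℝ :=
  ⨅ z : Fin d → ℤ, ‖x - y - (WithLp.equiv 2 (Fin d → ℝ)).symm (fun i => (z i : ℝ))‖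

/-- The half-open unit cube `S = (-1/2, 1/2]^d`. -/
def cube (d : ℕ) : Set (EuclideanSpace ℝ (Fin d)) :=
  {x | ∀ i, x i ∈ Set.Ioc (-(1/2) : ℝ) (1/2)}

/-- The random connection model: i.i.d. uniform points `X`, coupled Poisson counts `N`,
i.i.d. uniform edge variables `U`, with the three families mutually independent, and a
non-increasing connection function `g : [0,∞) → [0,1]` with finite positive integral `α`. -/
structure Model (d : ℕ) {Ω : Type*} [MeasurableSpace Ω] (P : Measure Ω) where
  g : ℝ → ℝ
  α : ℝ
  X : ℕ → Ω → EuclideanSpace ℝ (Fin d)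
  N : ℕ → Ω → ℕ
  U : ℕ → ℕ → Ω → ℝ
  g_antitone : AntitoneOn g (Set.Ici 0)
  g_mem : ∀ r : ℝ, 0 ≤ r → g r ∈ Set.Icc (0 : ℝ) 1
  g_integrable : MeasureTheory.Integrable (fun x : EuclideanSpace ℝ (Fin d) => g ‖x‖)
  α_def : α = ∫ x : EuclideanSpace ℝ (Fin d), g ‖x‖
  α_pos : 0 < α
  X_meas : ∀ i, Measurable (X i)
  X_unif : ∀ i : ℕ, 1 ≤ i → Measure.map (X i) P = volume.restrict (cube d)
  X_indep : iIndepFun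
    (fun i : {i : ℕ // 1 ≤ i} => X i) P
  N_meas : ∀ n, Measurable (N n)
  N_mono : ∀ ω, Monotone fun n => N n ω
  N_poisson : ∀ n k : ℕ,
    P {ω | N n ω = k} = ENNReal.ofReal (Real.exp (-(n : ℝ)) * (n : ℝ) ^ k / k.factorial)
  U_meas : ∀ i j, Measurable (U i j)
  U_unif : ∀ i j : ℕ, 1 ≤ i → i < j →
    Measure.map (U i j) P = volume.restrict (Set.Icc (0 : ℝ) 1)
  U_indep : iIndepFun
    (fun p : {p : ℕ × ℕ // 1 ≤ p.1 ∧ p.1 < p.2} => U p.1.1 p.1.2) P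
  families_indep : iIndep
    (![MeasurableSpace.comap (fun ω => fun i : ℕ => X i ω) inferInstance,
       MeasurableSpace.comap (fun ω => fun n : ℕ => N n ω) inferInstance,
       MeasurableSpace.comap (fun ω => fun p : ℕ × ℕ => U p.1 p.2 ω) inferInstance]) P

variable {d : ℕ} {Ω : Type*} [MeasurableSpace Ω] {P : Measure Ω}

/-- Adjacency in the graph `G_n(r)`: vertices `1 ≤ i,j ≤ N_n` are joined iff
`U_{ij} ≤ g(dist(X_i,X_j)/r)`. -/
def adj (M : Model d P) (n : ℕ) (r : ℝ) (ω : Ω) (i j : ℕ) : Prop :=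
  i ≠ j ∧ 1 ≤ i ∧ 1 ≤ j ∧ i ≤ M.N n ω ∧ j ≤ M.N n ω ∧
    M.U (min i j) (max i j) ω ≤ M.g (torusDist (M.X i ω) (M.X j ω) / r)

/-- The degree of vertex `i` in `G_n(r)`. -/
def deg (M : Model d P) (n : ℕ) (r : ℝ) (ω : Ω) (i : ℕ) : ℕ :=
  {j : ℕ | adj M n r ω i j}.ncard

/-- `W_n(r)`, the number of isolated vertices of `G_n(r)`. -/
def isolatedCount (M : Model d P) (n : ℕ) (r : ℝ) (ω : Ω) : ℕ :=
  {i : ℕ | 1 ≤ i ∧ i ≤ M.N n ω ∧ deg M n r ω i = 0}.ncard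


/-- `r̂_n(γ)` defined by `r̂_n(γ)^d = γ log n / (α n)`. -/
def rhat (M : Model d P) (γ : ℝ) (n : ℕ) : ℝ :=
  (γ * Real.log n / (M.α * n)) ^ ((1 : ℝ) / d)

/-- `d_n`, the critical parameter for absence of isolated nodes. -/
def critRadius (M : Model d P) (n : ℕ) (ω : Ω) : ℝ :=
  sInf {r : ℝ | 0 < r ∧ isolatedCount M n r ω = 0}

/-- The maximum vertex degree `Δ_n` of `G_n(r)`. -/
def maxDeg (M : Model d P) (n : ℕ) (r : ℝ) (ω : Ω) : ℕ :=
  (Finset.Icc 1 (M.N n ω)).sup (deg M n r ω)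

/-- The minimum vertex degree `δ_n` of `G_n(r)`. -/
def minDeg (M : Model d P) (n : ℕ) (r : ℝ) (ω : Ω) : ℕ :=
  sInf {k : ℕ | ∃ i, 1 ≤ i ∧ i ≤ M.N n ω ∧ deg M n r ω i = k}

/-- The length (toroidal metric) of the longest edge of `G_n(r)` (`0` if there are no edges). -/
def longestEdge (M : Model d P) (n : ℕ) (r : ℝ) (ω : Ω) : ℝ :=
  sSup ({0} ∪ {t : ℝ | ∃ i j, adj M n r ω i j ∧ t = torusDist (M.X i ω) (M.X j ω)})

/-- Connectivity of `G_n(r)`: any two vertices are joined by a path. -/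
def connectedGraph (M : Model d P) (n : ℕ) (r : ℝ) (ω : Ω) : Prop :=
  ∀ i j : ℕ, 1 ≤ i → i ≤ M.N n ω → 1 ≤ j → j ≤ M.N n ω →
    Relation.ReflTransGen (adj M n r ω) i j

/-- `H(x) = 1 - x + x log x` (with `H(0) = 1`, since `log 0 = 0` in Lean). -/
def H (x : ℝ) : ℝ := 1 - x + x * Real.log x

/-- The inverse of the restriction of `H` to `[1, ∞)`. -/
def Hplusinv (y : ℝ) : ℝ := sInf {x : ℝ | 1 ≤ x ∧ y ≤ H x}

/-- The inverse of the restriction of `H` to `[0, 1]`. -/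
def Hminusinv (y : ℝ) : ℝ := sInf {x : ℝ | 0 ≤ x ∧ H x ≤ y}

/-- The standard normal distribution function. -/
def stdNormalCDF (x : ℝ) : ℝ :=
  ∫ t in Set.Iic x, Real.exp (-t ^ 2 / 2) / Real.sqrt (2 * Real.pi)

/-- Given `Y`, independent uniform variables all exceed the thresholds `t k Y` with conditional
probability `∏ (1 - t k Y)`. -/
lemma measure_forall_lt_uniform {Ω 𝓨 κ : Type*} [MeasurableSpace Ω] [MeasurableSpace 𝓨]
    {P : Measure Ω} [IsProbabilityMeasure P] {Y : Ω → 𝓨} {V : κ → Ω → ℝ}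
    (hY : Measurable Y) (hV : ∀ k, Measurable (V k)) (hindV : iIndepFun V P)
    (hunif : ∀ k, P.map (V k) = volume.restrict (Icc (0 : ℝ) 1))
    (hYV : IndepFun Y (fun ω k => V k ω) P) (K : Finset κ) {t : κ → 𝓨 → ℝ}
    (ht : ∀ k, Measurable (t k)) (ht0 : ∀ k y, 0 ≤ t k y) :
    P {ω | ∀ k ∈ K, t k (Y ω) < V k ω} =
      ∫⁻ ω, ∏ k ∈ K, ENNReal.ofReal (1 - t k (Y ω)) ∂P := by
  have hVm : Measurable (fun ω k => V k ω) := measurable_pi_lambda _ hV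
  have hS : MeasurableSet {p : 𝓨 × (κ → ℝ) | ∀ k ∈ K, t k p.1 < p.2 k} := by
    have : {p : 𝓨 × (κ → ℝ) | ∀ k ∈ K, t k p.1 < p.2 k} =
        ⋂ k ∈ K, {p : 𝓨 × (κ → ℝ) | t k p.1 < p.2 k} := by ext; simp
    rw [this]
    refine Finset.measurableSet_biInter _ fun k _ => measurableSet_lt ?_ ?_
    · exact (ht k).comp measurable_fst
    · exact (measurable_pi_apply k).comp measurable_snd
  have hprod := hYV.map_prod_eq_prod_map_map hY.aemeasurable hVm.aemeasurable
  have h1 : P {ω | ∀ k ∈ K, t k (Y ω) < V k ω} =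
      (P.map fun ω => (Y ω, fun k => V k ω)) {p | ∀ k ∈ K, t k p.1 < p.2 k} := by
    rw [Measure.map_apply (hY.prodMk hVm) hS]; rfl
  have := Measure.isProbabilityMeasure_map (μ := P) hVm.aemeasurable
  rw [h1, hprod, Measure.prod_apply hS, lintegral_map (measurable_measure_prodMk_left hS) hY]
  refine lintegral_congr fun ω => ?_
  rw [Measure.map_apply hVm (measurable_prodMk_left hS)]
  have h2 : (fun ω k => V k ω) ⁻¹'
      (Prod.mk (Y ω) ⁻¹' {p : 𝓨 × (κ → ℝ) | ∀ k ∈ K, t k p.1 < p.2 k}) =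
      ⋂ k ∈ K, V k ⁻¹' Ioi (t k (Y ω)) := by ext; simp
  rw [h2, hindV.measure_inter_preimage_eq_mul K (fun _ _ => measurableSet_Ioi)]
  refine Finset.prod_congr rfl fun k _ => ?_
  rw [← Measure.map_apply (hV k) measurableSet_Ioi, hunif k,
    Measure.restrict_apply measurableSet_Ioi]
  have h3 : Ioi (t k (Y ω)) ∩ Icc 0 1 = Ioc (t k (Y ω)) 1 := by
    ext x
    simp only [mem_inter_iff, mem_Ioi, mem_Icc, mem_Ioc]
    exact ⟨fun h => ⟨h.1, h.2.2⟩, fun h => ⟨h.1, ((ht0 k _).trans_lt h.1).le, h.2⟩⟩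
  rw [h3, Real.volume_Ioc]

/-- Integrating out the variables indexed by `R` in a product, given an independent `Y`. -/
lemma lintegral_prod_indep {Ω 𝓨 E ι : Type*} [MeasurableSpace Ω] [MeasurableSpace 𝓨]
    [MeasurableSpace E] {P : Measure Ω} [IsProbabilityMeasure P] {Y : Ω → 𝓨} {X : ι → Ω → E}
    {ν : Measure E} (hY : Measurable Y) (hX : ∀ k, Measurable (X k))
    (hindX : iIndepFun X P)
    (hlaw : ∀ k, P.map (X k) = ν) (R : Finset ι)
    (hYX : IndepFun Y (fun ω (k : R) => X k ω) P)
    {φ : 𝓨 → E → ENNReal} (hφ : Measurable (Function.uncurry φ)) :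
    ∫⁻ ω, ∏ k ∈ R, φ (Y ω) (X k ω) ∂P = ∫⁻ ω, (∫⁻ z, φ (Y ω) z ∂ν) ^ R.card ∂P := by
  have hXm : Measurable (fun ω (k : R) => X k ω) := measurable_pi_lambda _ fun k => hX k
  have hprod := hYX.map_prod_eq_prod_map_map hY.aemeasurable hXm.aemeasurable
  have := Measure.isProbabilityMeasure_map (μ := P) hXm.aemeasurable
  have hΨ : Measurable fun p : 𝓨 × (R → E) => ∏ k : R, φ p.1 (p.2 k) :=
    Finset.measurable_fun_prod _ fun k _ => hφ.comp
      (measurable_fst.prodMk ((measurable_pi_apply k).comp measurable_snd))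
  calc ∫⁻ ω, ∏ k ∈ R, φ (Y ω) (X k ω) ∂P
      = ∫⁻ ω, ∏ k : R, φ (Y ω) (X k ω) ∂P := by
        refine lintegral_congr fun ω => ?_
        exact (Finset.prod_coe_sort R fun k => φ (Y ω) (X k ω)).symm
    _ = ∫⁻ p, ∏ k : R, φ p.1 (p.2 k) ∂(P.map fun ω => (Y ω, fun k : R => X k ω)) := by
        rw [lintegral_map hΨ (hY.prodMk hXm)]
    _ = ∫⁻ ω, (∫⁻ z, φ (Y ω) z ∂ν) ^ R.card ∂P := by
        rw [hprod, lintegral_prod _ hΨ.aemeasurable, lintegral_map hΨ.lintegral_prod_right' hY]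
        refine lintegral_congr fun ω => ?_
        have hφω : Measurable (φ (Y ω)) := hφ.comp measurable_prodMk_left
        have hΨω : Measurable fun y : R → E => ∏ k : R, φ (Y ω) (y k) :=
          Finset.measurable_fun_prod _ fun k _ => hφω.comp (measurable_pi_apply k)
        rw [lintegral_map hΨω hXm]
        have hind : iIndepFun (fun k ω' => φ (Y ω) (X k ω')) P :=
          hindX.comp (fun _ => φ (Y ω)) fun _ => hφω
        have h1 := lintegral_prod_eq_prod_lintegral_of_indepFun R _ hind
          fun k => hφω.comp (hX k)
        rw [← Finset.prod_const]
        calc _ = ∫⁻ ω', ∏ k ∈ R, φ (Y ω) (X k ω') ∂P := by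
              refine lintegral_congr fun ω' => ?_
              exact Finset.prod_coe_sort R fun k => φ (Y ω) (X k ω')
          _ = _ := h1
          _ = _ := Finset.prod_congr rfl fun k _ => by
              rw [← hlaw k, lintegral_map hφω (hX k)]

/-- Second-moment bound: if the events `A i` have probability `p` and pairwise intersections have
probability at most `s`, then they all fail with probability at most `1/(mp) + s/p² - 1`. -/
lemma measureReal_forall_notMem_le {Ω ι : Type*} [MeasurableSpace Ω]
    {P : Measure Ω} [IsProbabilityMeasure P] (I : Finset ι) (A : ι → Set Ω)
    (hA : ∀ i, MeasurableSet (A i)) {p s : ℝ} (hp : 0 < p) (hs : 0 ≤ s) (hI : I.Nonempty)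
    (hAp : ∀ i ∈ I, P.real (A i) = p)
    (hAs : ∀ i ∈ I, ∀ j ∈ I, i ≠ j → P.real (A i ∩ A j) ≤ s) :
    P {ω | ∀ i ∈ I, ω ∉ A i} ≤ ENNReal.ofReal (1 / (I.card * p) + (s / p ^ 2 - 1)) := by
  classical
  set W : Ω → ℝ := fun ω => ∑ i ∈ I, (A i).indicator 1 ω with hW
  have hcard : (0 : ℝ) < I.card := by exact_mod_cast hI.card_pos
  have hLp : ∀ i, MemLp ((A i).indicator (1 : Ω → ℝ)) 2 P := fun i =>
    memLp_indicator_const 2 (hA i) (1 : ℝ) (Or.inr (measure_ne_top _ _))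
  have hWLp : MemLp W 2 P := memLp_finsetSum _ fun i _ => hLp i
  have hint : ∀ i, ∫ ω, (A i).indicator (1 : Ω → ℝ) ω ∂P = P.real (A i) := fun i =>
    integral_indicator_one (hA i)
  have hEW : P[W] = I.card * p := by
    rw [hW, integral_finsetSum _ fun i _ => (hLp i).integrable (by norm_num)]
    simp_rw [hint]
    rw [Finset.sum_congr rfl hAp]; simp
  have hsq : ∀ ω, W ω ^ 2 = ∑ i ∈ I, ∑ j ∈ I, (A i ∩ A j).indicator (1 : Ω → ℝ) ω := by
    intro ω
    rw [hW, sq, Finset.sum_mul_sum]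
    refine Finset.sum_congr rfl fun i _ => Finset.sum_congr rfl fun j _ => ?_
    rw [inter_indicator_one]; rfl
  have hEW2 : P[W ^ 2] ≤ I.card * p + I.card ^ 2 * s := by
    have hii : ∀ i j, Integrable ((A i ∩ A j).indicator (1 : Ω → ℝ)) P := fun i j =>
      (integrable_const (1 : ℝ)).indicator ((hA i).inter (hA j))
    have : P[W ^ 2] = ∑ i ∈ I, ∑ j ∈ I, P.real (A i ∩ A j) := by
      simp only [Pi.pow_apply, hsq]
      rw [integral_finsetSum _ fun i _ => integrable_finsetSum _ fun j _ => hii i j]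
      refine Finset.sum_congr rfl fun i _ => ?_
      rw [integral_finsetSum _ fun j _ => hii i j]
      exact Finset.sum_congr rfl fun j _ => integral_indicator_one ((hA i).inter (hA j))
    rw [this]
    calc ∑ i ∈ I, ∑ j ∈ I, P.real (A i ∩ A j)
        ≤ ∑ i ∈ I, ∑ j ∈ I, ((if i = j then p else 0) + s) := by
          refine Finset.sum_le_sum fun i hi => Finset.sum_le_sum fun j hj => ?_
          split_ifs with h
          · subst h; rw [inter_self, hAp i hi]; linarith
          · rw [zero_add]; exact hAs i hi j hj h
      _ = I.card * p + I.card ^ 2 * s := by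
          simp only [Finset.sum_add_distrib, Finset.sum_ite_eq, Finset.sum_const, nsmul_eq_mul,
            Finset.sum_ite_mem, Finset.inter_self]
          ring
  have hc : 0 < I.card * p := by positivity
  calc P {ω | ∀ i ∈ I, ω ∉ A i} ≤ P {ω | I.card * p ≤ |W ω - P[W]|} := by
        refine measure_mono fun ω hω => ?_
        have : W ω = 0 := Finset.sum_eq_zero fun i hi => indicator_of_notMem (hω i hi) _
        simp [this, hEW, abs_of_pos hc]
    _ ≤ ENNReal.ofReal (variance W P / (I.card * p) ^ 2) := meas_ge_le_variance_div_sq hWLp hc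
    _ ≤ _ := by
        refine ENNReal.ofReal_le_ofReal ?_
        rw [variance_eq_sub hWLp, hEW, div_le_iff₀ (by positivity)]
        have : (1 / (I.card * p) + (s / p ^ 2 - 1)) * (I.card * p) ^ 2 =
            I.card * p + I.card ^ 2 * s - (I.card * p) ^ 2 := by field_simp; ring
        rw [this]; linarith

lemma cube_measurableSet (d : ℕ) : MeasurableSet (cube d) := by
  have : cube d = ⋂ i, (fun x : EuclideanSpace ℝ (Fin d) => x i) ⁻¹' Ioc (-(1/2) : ℝ) (1/2) := by
    ext; simp [cube]
  rw [this]
  exact MeasurableSet.iInter fun i => (by fun_prop : Measurable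
    fun x : EuclideanSpace ℝ (Fin d) => x i) measurableSet_Ioc

lemma torusDist_measurable (d : ℕ) :
    Measurable fun p : EuclideanSpace ℝ (Fin d) × EuclideanSpace ℝ (Fin d) =>
      torusDist p.1 p.2 := by
  unfold torusDist
  exact Measurable.iInf fun z => by fun_prop

lemma torusDist_nonneg {d : ℕ} (x y : EuclideanSpace ℝ (Fin d)) : 0 ≤ torusDist x y :=
  Real.iInf_nonneg fun _ => norm_nonneg _

lemma torusDist_comm {d : ℕ} (x y : EuclideanSpace ℝ (Fin d)) : torusDist x y = torusDist y x := by
  unfold torusDist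
  refine (Equiv.neg (Fin d → ℤ)).iInf_congr fun z => ?_
  rw [← norm_neg]
  congr 1
  ext i
  simp
  ring

/-- The toroidal distance is the norm of the representative of the difference in the cube. -/
lemma torusDist_eq_norm {d : ℕ} {x y w : EuclideanSpace ℝ (Fin d)} (hw : w ∈ cube d)
    (k : Fin d → ℤ) (hk : ∀ i, x i - y i = w i + k i) : torusDist x y = ‖w‖ := by
  have hbdd : BddBelow (range fun z : Fin d → ℤ =>
      ‖x - y - (WithLp.equiv 2 (Fin d → ℝ)).symm (fun i => (z i : ℝ))‖) :=
    ⟨0, by rintro _ ⟨z, rfl⟩; exact norm_nonneg _⟩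
  refine le_antisymm ((ciInf_le hbdd k).trans_eq ?_) (le_ciInf fun z => ?_)
  · congr 1
    ext i
    simp [hk]
  · rw [EuclideanSpace.norm_eq, EuclideanSpace.norm_eq]
    refine Real.sqrt_le_sqrt (Finset.sum_le_sum fun i _ => ?_)
    simp only [Real.norm_eq_abs, sq_abs, PiLp.sub_apply, WithLp.equiv_symm_apply, hk]
    obtain ⟨h1, h2⟩ := hw i
    have h3 : w i + k i - z i = w i + ((k i - z i : ℤ) : ℝ) := by push_cast; ring
    rw [h3]
    generalize k i - z i = n
    rcases lt_trichotomy n 0 with hn | hn | hn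
    · have : (n : ℝ) ≤ -1 := by exact_mod_cast (by omega : n ≤ -1)
      nlinarith
    · simp [hn]
    · have : (1 : ℝ) ≤ n := by exact_mod_cast hn
      nlinarith

lemma lintegral_cube (d : ℕ) (f : EuclideanSpace ℝ (Fin d) → ENNReal) :
    ∫⁻ z in cube d, f z =
      ∫⁻ z in {z : Fin d → ℝ | ∀ i, z i ∈ Ioc (-(1/2) : ℝ) (-(1/2) + 1)},
        f (WithLp.toLp 2 z) := by
  rw [← (PiLp.volume_preserving_toLp (Fin d)).setLIntegral_comp_preimage_emb
    (MeasurableEquiv.toLp 2 (Fin d → ℝ)).measurableEmbedding f (cube d)]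
  congr 2
  ext z
  simp only [cube, mem_preimage, mem_ofPred_eq]
  norm_num

lemma measurePreserving_cube_torus (d : ℕ) :
    MeasurePreserving (fun (z : Fin d → ℝ) i => (z i : UnitAddCircle))
      (volume.restrict {z : Fin d → ℝ | ∀ i, z i ∈ Ioc (-(1/2) : ℝ) (-(1/2) + 1)})
      (volume : Measure (Fin d → UnitAddCircle)) := by
  have h := measurePreserving_pi (fun _ : Fin d => volume.restrict (Ioc (-(1/2) : ℝ) (-(1/2) + 1)))
    (fun _ => (volume : Measure UnitAddCircle))
    (fun _ => AddCircle.measurePreserving_mk 1 (-(1/2)))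
  rw [← Measure.restrict_pi_pi] at h
  convert! h using 2
  ext z
  simp

lemma cube_volume (d : ℕ) : volume (cube d) = 1 := by
  have h := lintegral_cube d 1
  have h2 := (measurePreserving_cube_torus d).measure_preimage nullMeasurableSet_univ
  simp only [Pi.one_apply, lintegral_one, preimage_univ] at h h2
  rw [← Measure.restrict_apply_univ, h, h2]
  rw [volume_pi, Measure.pi_univ]
  simp

instance (d : ℕ) : IsProbabilityMeasure (volume.restrict (cube d)) :=
  ⟨by rw [Measure.restrict_apply_univ, cube_volume]⟩

/-- The representative in the cube of a point of the torus. -/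
def torusRep (d : ℕ) (y : Fin d → UnitAddCircle) : EuclideanSpace ℝ (Fin d) :=
  WithLp.toLp 2 fun i => (AddCircle.equivIoc 1 (-(1/2)) (y i) : ℝ)

@[fun_prop]
lemma torusRep_measurable (d : ℕ) : Measurable (torusRep d) := by
  refine (MeasurableEquiv.toLp 2 (Fin d → ℝ)).measurable.comp (measurable_pi_lambda _ fun i => ?_)
  exact measurable_subtype_coe.comp
    ((AddCircle.measurableEquivIoc 1 (-(1/2))).measurable.comp (measurable_pi_apply i))

lemma torusDist_eq_norm_torusRep {d : ℕ} (x z : EuclideanSpace ℝ (Fin d)) :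
    torusDist x z = ‖torusRep d ((fun i => (x i : UnitAddCircle)) - fun i => (z i : UnitAddCircle))‖
    := by
  have hmem : ∀ i, (toIocMod (zero_lt_one' ℝ) (-(1/2)) (x i - z i)) ∈
      Ioc (-(1/2) : ℝ) (1/2) := fun i => by
    have := toIocMod_mem_Ioc (zero_lt_one' ℝ) (-(1/2)) (x i - z i)
    norm_num at this ⊢
    exact this
  have hrep : ∀ i, torusRep d ((fun i => (x i : UnitAddCircle)) - fun i => (z i : UnitAddCircle)) i
      = toIocMod (zero_lt_one' ℝ) (-(1/2)) (x i - z i) := fun i => rfl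
  refine torusDist_eq_norm (fun i => ?_)
    (fun i => toIocDiv (zero_lt_one' ℝ) (-(1/2)) (x i - z i)) fun i => ?_
  · rw [hrep]; exact hmem i
  · rw [hrep]
    have := toIocMod_add_toIocDiv_zsmul (zero_lt_one' ℝ) (-(1/2)) (x i - z i)
    simpa using this.symm

/-- Translation invariance: integrals of functions of the toroidal distance to `x` do not depend
on `x`. -/
lemma lintegral_cube_torusDist {d : ℕ} {F : ℝ → ENNReal} (hF : Measurable F)
    (x : EuclideanSpace ℝ (Fin d)) :
    ∫⁻ z in cube d, F (torusDist x z) = ∫⁻ z in cube d, F ‖z‖ := by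
  have key : ∀ x : EuclideanSpace ℝ (Fin d), ∫⁻ z in cube d, F (torusDist z x) =
      ∫⁻ y : Fin d → UnitAddCircle, F ‖torusRep d y‖ := by
    intro x
    rw [lintegral_cube, ← lintegral_sub_right_eq_self (fun y => F ‖torusRep d y‖)
      (fun i => (x i : UnitAddCircle)), ← (measurePreserving_cube_torus d).map_eq,
      lintegral_map (by fun_prop) (measurePreserving_cube_torus d).measurable]
    simp_rw [torusDist_eq_norm_torusRep]
  simp_rw [torusDist_comm x]
  rw [key x, ← key 0]
  refine setLIntegral_congr_fun (cube_measurableSet d) fun z hz => ?_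
  rw [torusDist_eq_norm hz 0 (by simp)]

/-- The connection probability between two points at scale `r`. -/
def conn (M : Model d P) (r : ℝ) (x y : EuclideanSpace ℝ (Fin d)) : ℝ :=
  M.g (max 0 (torusDist x y / r))

/-- The probability that a given point is joined to an independent uniform point at scale `r`. -/
def linkProb (M : Model d P) (r : ℝ) : ℝ := ∫ z in cube d, M.g (max 0 (‖z‖ / r))

lemma measurable_g_max (M : Model d P) : Measurable fun t : ℝ => M.g (max 0 t) := by
  refine Antitone.measurable fun a b hab => ?_
  exact M.g_antitone (mem_Ici.2 (le_max_left _ _)) (mem_Ici.2 (le_max_left _ _))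
    (max_le_max le_rfl hab)

@[fun_prop]
lemma conn_measurable (M : Model d P) (r : ℝ) {β : Type*} [MeasurableSpace β]
    {u v : β → EuclideanSpace ℝ (Fin d)} (hu : Measurable u) (hv : Measurable v) :
    Measurable fun b => conn M r (u b) (v b) :=
  (measurable_g_max M).comp (((torusDist_measurable d).comp (hu.prodMk hv)).div_const r)

lemma conn_measurable_right (M : Model d P) (r : ℝ) (x : EuclideanSpace ℝ (Fin d)) :
    Measurable (conn M r x) := conn_measurable M r measurable_const measurable_id

lemma conn_nonneg (M : Model d P) (r : ℝ) (x y : EuclideanSpace ℝ (Fin d)) : 0 ≤ conn M r x y :=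
  (M.g_mem _ (le_max_left _ _)).1

lemma conn_le_one (M : Model d P) (r : ℝ) (x y : EuclideanSpace ℝ (Fin d)) : conn M r x y ≤ 1 :=
  (M.g_mem _ (le_max_left _ _)).2

lemma conn_integrable (M : Model d P) (r : ℝ) (x : EuclideanSpace ℝ (Fin d)) :
    IntegrableOn (conn M r x) (cube d) :=
  Integrable.of_bound (conn_measurable_right M r x).aestronglyMeasurable 1
    (ae_of_all _ fun z => by
      rw [Real.norm_of_nonneg (conn_nonneg M r x z)]; exact conn_le_one M r x z)

lemma linkProb_nonneg (M : Model d P) (r : ℝ) : 0 ≤ linkProb M r :=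
  integral_nonneg fun _ => (M.g_mem _ (le_max_left _ _)).1

lemma lintegral_conn (M : Model d P) (r : ℝ) (x : EuclideanSpace ℝ (Fin d)) :
    ∫⁻ z in cube d, ENNReal.ofReal (conn M r x z) = ENNReal.ofReal (linkProb M r) := by
  have hm : Measurable fun t : ℝ => ENNReal.ofReal (M.g (max 0 (t / r))) :=
    ENNReal.measurable_ofReal.comp ((measurable_g_max M).comp (measurable_id.div_const r))
  have h0 : ∀ t : ℝ, 0 ≤ M.g (max 0 t) := fun t => (M.g_mem _ (le_max_left _ _)).1
  rw [linkProb, ofReal_integral_eq_lintegral_ofReal ?_ (ae_of_all _ fun z => h0 _)]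
  · exact lintegral_cube_torusDist hm x
  · refine Integrable.of_bound ((measurable_g_max M).comp
      (measurable_norm.div_const r)).aestronglyMeasurable 1 (ae_of_all _ fun z => ?_)
    rw [Real.norm_of_nonneg (h0 _)]; exact (M.g_mem _ (le_max_left _ _)).2

lemma lintegral_conn_left (M : Model d P) (r : ℝ) (x : EuclideanSpace ℝ (Fin d)) :
    ∫⁻ z in cube d, ENNReal.ofReal (conn M r z x) = ENNReal.ofReal (linkProb M r) := by
  simp_rw [← lintegral_conn M r x, conn, torusDist_comm]

lemma integral_conn (M : Model d P) (r : ℝ) (x : EuclideanSpace ℝ (Fin d)) :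
    ∫ z in cube d, conn M r x z = linkProb M r := by
  rw [integral_eq_lintegral_of_nonneg_ae (ae_of_all _ fun z => conn_nonneg M r x z)
    (conn_measurable_right M r x).aestronglyMeasurable, lintegral_conn,
    ENNReal.toReal_ofReal (linkProb_nonneg M r)]

lemma linkProb_le (M : Model d P) {r : ℝ} (hr : 0 < r) : linkProb M r ≤ M.α * r ^ d := by
  have hmax : ∀ z : EuclideanSpace ℝ (Fin d), M.g (max 0 (‖z‖ / r)) = M.g ‖r⁻¹ • z‖ := fun z => by
    rw [max_eq_right (by positivity), norm_smul, norm_inv, Real.norm_of_nonneg hr.le,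
      div_eq_inv_mul]
  have hint : Integrable fun z : EuclideanSpace ℝ (Fin d) => M.g ‖r⁻¹ • z‖ :=
    M.g_integrable.comp_smul (inv_ne_zero hr.ne')
  calc linkProb M r = ∫ z in cube d, M.g ‖r⁻¹ • z‖ := by simp_rw [linkProb, hmax]
    _ ≤ ∫ z : EuclideanSpace ℝ (Fin d), M.g ‖r⁻¹ • z‖ :=
        setIntegral_le_integral hint (ae_of_all _ fun z => (M.g_mem _ (norm_nonneg _)).1)
    _ = M.α * r ^ d := by
        rw [Measure.integral_comp_inv_smul_of_nonneg volume
          (fun z : EuclideanSpace ℝ (Fin d) => M.g ‖z‖) hr.le, ← M.α_def]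
        simp [mul_comm]

lemma indepFun_points_marks (M : Model d P) :
    IndepFun (fun ω (i : ℕ) => M.X i ω) (fun ω (p : ℕ × ℕ) => M.U p.1 p.2 ω) P :=
  M.families_indep.indep (i := 0) (j := 2) (by decide)

/-- The probability that no vertex of `B` is joined to a vertex of `R`. -/
lemma measure_no_cross_edge [IsProbabilityMeasure P] (M : Model d P) (r : ℝ)
    {B R : Finset {i : ℕ // 1 ≤ i}} (hBR : Disjoint B R) :
    P {ω | ∀ b ∈ B, ∀ k ∈ R, conn M r (M.X b ω) (M.X k ω) <
        M.U (min (b : ℕ) k) (max (b : ℕ) k) ω} =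
      ∫⁻ ω, (∫⁻ z in cube d, ∏ b ∈ B, ENNReal.ofReal (1 - conn M r (M.X b ω) z)) ^ R.card ∂P := by
  have hne : ∀ (b : B) (k : R), (b : ℕ) ≠ (k : ℕ) := fun b k h =>
    Finset.disjoint_left.1 hBR b.2 (by have := Subtype.ext h; rw [this]; exact k.2)
  let e : B × R → {p : ℕ × ℕ // 1 ≤ p.1 ∧ p.1 < p.2} := fun x =>
    ⟨(min (x.1 : ℕ) x.2, max (x.1 : ℕ) x.2), le_min x.1.1.2 x.2.1.2,
      min_lt_max.2 (hne x.1 x.2)⟩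
  have he : Function.Injective e := by
    rintro ⟨b, k⟩ ⟨b', k'⟩ h
    simp only [e, Subtype.mk.injEq, Prod.mk.injEq] at h
    have h1 := hne b k
    have h2 := hne b' k'
    have h3 := hne b k'
    have h4 := hne b' k
    have h5 : (b : ℕ) = b' ∧ (k : ℕ) = k' := by omega
    exact Prod.ext (Subtype.ext (Subtype.ext h5.1)) (Subtype.ext (Subtype.ext h5.2))
  have hXm : Measurable fun ω (i : ℕ) => M.X i ω := measurable_pi_lambda _ M.X_meas
  have hA := measure_forall_lt_uniform (P := P) (κ := B × R) (Y := fun ω (i : ℕ) => M.X i ω)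
    (V := fun x => M.U (e x).1.1 (e x).1.2) hXm (fun x => M.U_meas _ _)
    (M.U_indep.precomp he) (fun x => M.U_unif _ _ (e x).2.1 (e x).2.2)
    ((indepFun_points_marks M).comp measurable_id
      (measurable_pi_lambda (fun (u : ℕ × ℕ → ℝ) x => u (e x).1) fun x =>
        measurable_pi_apply _)) Finset.univ
    (t := fun x y => conn M r (y x.1) (y x.2))
    (fun x => conn_measurable M r (measurable_pi_apply _) (measurable_pi_apply _))
    (fun x y => conn_nonneg M r _ _)
  have hset : {ω | ∀ b ∈ B, ∀ k ∈ R, conn M r (M.X b ω) (M.X k ω) <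
        M.U (min (b : ℕ) k) (max (b : ℕ) k) ω} =
      {ω | ∀ x ∈ (Finset.univ : Finset (B × R)),
        conn M r (M.X x.1 ω) (M.X x.2 ω) < M.U (e x).1.1 (e x).1.2 ω} := by
    ext ω
    exact ⟨fun h x _ => h x.1 x.1.2 x.2 x.2.2,
      fun h b hb k hk => h (⟨b, hb⟩, ⟨k, hk⟩) (Finset.mem_univ _)⟩
  rw [hset, hA]
  have hφ : Measurable (Function.uncurry fun (y : B → EuclideanSpace ℝ (Fin d))
      (z : EuclideanSpace ℝ (Fin d)) => ∏ b : B, ENNReal.ofReal (1 - conn M r (y b) z)) :=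
    Finset.measurable_fun_prod _ fun b _ => ENNReal.measurable_ofReal.comp
      (measurable_const.sub (conn_measurable M r
        ((measurable_pi_apply b).comp measurable_fst) measurable_snd))
  have hB := lintegral_prod_indep (P := P) (Y := fun ω (b : B) => M.X b ω)
    (X := fun i : {i : ℕ // 1 ≤ i} => M.X i) (measurable_pi_lambda _ fun b => M.X_meas _)
    (fun k => M.X_meas _) M.X_indep (fun k => M.X_unif _ k.2) R
    (M.X_indep.indepFun_finset B R hBR fun k => M.X_meas _) hφ
  have hprod : ∀ ω z, ∏ b : B, ENNReal.ofReal (1 - conn M r (M.X b ω) z) =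
      ∏ b ∈ B, ENNReal.ofReal (1 - conn M r (M.X b ω) z) := fun ω z =>
    Finset.prod_coe_sort B fun b => ENNReal.ofReal (1 - conn M r (M.X b ω) z)
  simp only [hprod] at hB
  rw [← hB]
  refine lintegral_congr fun ω => ?_
  rw [Fintype.prod_prod_type_right]
  simp only [hprod]
  exact Finset.prod_coe_sort R
    fun k => ∏ b ∈ B, ENNReal.ofReal (1 - conn M r (M.X b ω) (M.X k ω))

lemma linkProb_le_one (M : Model d P) (r : ℝ) : linkProb M r ≤ 1 := by
  rw [← integral_conn M r 0]
  calc ∫ z in cube d, conn M r 0 z ≤ ∫ z in cube d, (1 : ℝ) :=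
        integral_mono (conn_integrable M r 0) (integrable_const 1) fun z => conn_le_one M r 0 z
    _ = 1 := by simp

/-- The probability that a vertex has no neighbour in `R`. -/
lemma measureReal_no_edge [IsProbabilityMeasure P] (M : Model d P) (r : ℝ)
    {i : {i : ℕ // 1 ≤ i}} {R : Finset {i : ℕ // 1 ≤ i}} (hi : i ∉ R) :
    P.real {ω | ∀ k ∈ R, conn M r (M.X i ω) (M.X k ω) <
        M.U (min (i : ℕ) k) (max (i : ℕ) k) ω} = (1 - linkProb M r) ^ R.card := by
  have h := measure_no_cross_edge M r (Finset.disjoint_singleton_left.2 hi)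
  simp only [Finset.mem_singleton, forall_eq, Finset.prod_singleton] at h
  have h1 : ∀ x, ∫⁻ z in cube d, ENNReal.ofReal (1 - conn M r x z) =
      ENNReal.ofReal (1 - linkProb M r) := fun x => by
    have hint : Integrable (fun z => 1 - conn M r x z) (volume.restrict (cube d)) :=
      (integrable_const 1).sub (conn_integrable M r x)
    rw [← ofReal_integral_eq_lintegral_ofReal hint
      (ae_of_all _ fun z => sub_nonneg.2 (conn_le_one M r x z)),
      integral_sub (integrable_const 1) (conn_integrable M r x), integral_conn]
    simp
  simp only [h1, lintegral_const, measure_univ, mul_one] at h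
  rw [measureReal_def, h, ENNReal.toReal_pow,
    ENNReal.toReal_ofReal (sub_nonneg.2 (linkProb_le_one M r))]

lemma add_pow_le_add_mul {a h b : ℝ} (ha : 0 ≤ a) (hh : 0 ≤ h) (hb : a + h ≤ b) (k : ℕ) :
    (a + h) ^ k ≤ a ^ k + k * h * b ^ (k - 1) := by
  induction k with
  | zero => simp
  | succ k ih =>
    have hb0 : 0 ≤ b := by linarith
    have h1 : (a + h) ^ k ≤ b ^ k := pow_le_pow_left₀ (by positivity) hb k
    have h2 : k * h * b ^ (k - 1) * a ≤ k * h * b ^ k := by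
      rcases k with _ | k
      · simp
      · simp only [Nat.add_sub_cancel, pow_succ b k, ← mul_assoc]
        gcongr
        linarith
    calc (a + h) ^ (k + 1) = (a + h) ^ k * a + h * (a + h) ^ k := by ring
      _ ≤ (a ^ k + k * h * b ^ (k - 1)) * a + h * b ^ k := by gcongr
      _ ≤ a ^ (k + 1) + (k + 1 : ℕ) * h * b ^ (k + 1 - 1) := by
        simp only [Nat.add_sub_cancel]; push_cast
        nlinarith [pow_succ a k]

/-- The probability that neither of two vertices has a neighbour in `R`. -/
lemma measureReal_no_edge_pair_le [IsProbabilityMeasure P] (M : Model d P) (r : ℝ)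
    {i j : {i : ℕ // 1 ≤ i}} {R : Finset {i : ℕ // 1 ≤ i}} (hi : i ∉ R) (hj : j ∉ R)
    (hij : i ≠ j) (hq : linkProb M r ≤ 1 / 2) :
    P.real {ω | ∀ b ∈ ({i, j} : Finset _), ∀ k ∈ R, conn M r (M.X b ω) (M.X k ω) <
        M.U (min (b : ℕ) k) (max (b : ℕ) k) ω} ≤
      (1 - linkProb M r) ^ (2 * R.card) +
        R.card * linkProb M r ^ 2 * (1 - linkProb M r) ^ (R.card - 1) := by
  set q := linkProb M r with hqdef
  have hq0 : 0 ≤ q := linkProb_nonneg M r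
  have hdisj : Disjoint {i, j} R := by simp [hi, hj]
  let h : EuclideanSpace ℝ (Fin d) → EuclideanSpace ℝ (Fin d) → ℝ := fun x y =>
    ∫ z in cube d, conn M r x z * conn M r y z
  have hhint : ∀ x y, IntegrableOn (fun z => conn M r x z * conn M r y z) (cube d) := fun x y =>
    Integrable.mono (conn_integrable M r x) ((conn_measurable_right M r x).mul
      (conn_measurable_right M r y)).aestronglyMeasurable (ae_of_all _ fun z => by
        rw [norm_mul, Real.norm_of_nonneg (conn_nonneg M r y z)]
        exact mul_le_of_le_one_right (norm_nonneg _) (conn_le_one M r y z))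
  have hh0 : ∀ x y, 0 ≤ h x y := fun x y =>
    integral_nonneg fun z => mul_nonneg (conn_nonneg M r x z) (conn_nonneg M r y z)
  have hhq : ∀ x y, h x y ≤ q := fun x y => by
    rw [hqdef, ← integral_conn M r x]
    exact integral_mono (hhint x y) (conn_integrable M r x) fun z =>
      mul_le_of_le_one_right (conn_nonneg M r x z) (conn_le_one M r y z)
  have hinner : ∀ x y, ∫⁻ z in cube d, ENNReal.ofReal (1 - conn M r x z) *
      ENNReal.ofReal (1 - conn M r y z) = ENNReal.ofReal (1 - 2 * q + h x y) := fun x y => by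
    have hx := conn_integrable M r x
    have hy := conn_integrable M r y
    have hexp : ∀ z, (1 - conn M r x z) * (1 - conn M r y z) =
        1 - conn M r x z - conn M r y z + conn M r x z * conn M r y z := fun z => by ring
    simp_rw [← ENNReal.ofReal_mul (sub_nonneg.2 (conn_le_one M r x _)), hexp]
    have hint1 : Integrable (fun z => 1 - conn M r x z) (volume.restrict (cube d)) :=
      (integrable_const 1).sub hx
    have hint2 : Integrable (fun z => 1 - conn M r x z - conn M r y z)
      (volume.restrict (cube d)) := hint1.sub hy
    have hint3 : Integrable (fun z => 1 - conn M r x z - conn M r y z +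
      conn M r x z * conn M r y z) (volume.restrict (cube d)) := hint2.add (hhint x y)
    rw [← ofReal_integral_eq_lintegral_ofReal hint3 (ae_of_all _ fun z => ?_)]
    · congr 1
      rw [integral_add hint2 (hhint x y), integral_sub hint1 hy,
        integral_sub (integrable_const 1) hx, integral_conn, integral_conn]
      simp only [integral_const, probReal_univ, smul_eq_mul, mul_one, h, ← hqdef]
      ring
    · have := mul_nonneg (sub_nonneg.2 (conn_le_one M r x z)) (sub_nonneg.2 (conn_le_one M r y z))
      rw [hexp] at this
      exact this
  have hE : ∫⁻ ω, ENNReal.ofReal (h (M.X i ω) (M.X j ω)) ∂P = ENNReal.ofReal (q ^ 2) := by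
    have hXind : IndepFun (M.X i) (M.X j) P := M.X_indep.indepFun hij
    have hswap : ∀ ω, ENNReal.ofReal (h (M.X i ω) (M.X j ω)) = ∫⁻ z in cube d,
        ENNReal.ofReal (conn M r (M.X i ω) z) * ENNReal.ofReal (conn M r (M.X j ω) z) := fun ω => by
      simp only [h]
      rw [ofReal_integral_eq_lintegral_ofReal (hhint _ _) (ae_of_all _ fun z =>
        mul_nonneg (conn_nonneg M r _ z) (conn_nonneg M r _ z))]
      simp_rw [ENNReal.ofReal_mul (conn_nonneg M r _ _)]
    have hmeas : ∀ l : ℕ, Measurable fun p : Ω × EuclideanSpace ℝ (Fin d) =>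
        ENNReal.ofReal (conn M r (M.X l p.1) p.2) := fun l =>
      ENNReal.measurable_ofReal.comp (conn_measurable M r
        ((M.X_meas l).comp measurable_fst) measurable_snd)
    have hleft : ∀ z, Measurable fun x => ENNReal.ofReal (conn M r x z) := fun z =>
      ENNReal.measurable_ofReal.comp (conn_measurable M r measurable_id measurable_const)
    have hmarg : ∀ (l : {i : ℕ // 1 ≤ i}) z, ∫⁻ ω, ENNReal.ofReal (conn M r (M.X l ω) z) ∂P =
        ENNReal.ofReal q := fun l z => by
      rw [hqdef, ← lintegral_conn_left M r z, ← M.X_unif l l.2, lintegral_map (hleft z)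
        (M.X_meas l)]
    simp_rw [hswap]
    rw [lintegral_lintegral_swap ((hmeas i).mul (hmeas j)).aemeasurable]
    have : ∀ z, ∫⁻ ω, ENNReal.ofReal (conn M r (M.X i ω) z) *
        ENNReal.ofReal (conn M r (M.X j ω) z) ∂P = ENNReal.ofReal (q ^ 2) := fun z => by
      have hmul := lintegral_mul_eq_lintegral_mul_lintegral_of_indepFun''
        ((hleft z).comp (M.X_meas i)).aemeasurable ((hleft z).comp (M.X_meas j)).aemeasurable
        (hXind.comp (hleft z) (hleft z))
      simp only [Function.comp_apply] at hmul
      rw [hmul, hmarg, hmarg, sq, ENNReal.ofReal_mul hq0]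
    simp [this]
  have hcross := measure_no_cross_edge M r hdisj
  simp only [Finset.prod_pair hij, hinner] at hcross
  rw [measureReal_def, hcross]
  refine ENNReal.toReal_le_of_le_ofReal ?_ ?_
  · have : 0 ≤ 1 - q := by linarith
    positivity
  have h1q : 0 ≤ 1 - q := by linarith
  have hpt : ∀ ω, ENNReal.ofReal (1 - 2 * q + h (M.X i ω) (M.X j ω)) ^ R.card ≤
      ENNReal.ofReal ((1 - q) ^ (2 * R.card)) +
        ENNReal.ofReal (R.card * (1 - q) ^ (R.card - 1)) *
          ENNReal.ofReal (h (M.X i ω) (M.X j ω)) := fun ω => by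
    have h0 := hh0 (M.X i ω) (M.X j ω)
    have h1 := hhq (M.X i ω) (M.X j ω)
    rw [← ENNReal.ofReal_pow (by linarith), ← ENNReal.ofReal_mul (by positivity),
      ← ENNReal.ofReal_add (by positivity) (by positivity)]
    refine ENNReal.ofReal_le_ofReal ?_
    have h2 := add_pow_le_add_mul (a := 1 - 2 * q) (b := 1 - q) (by linarith) h0
      (by linarith) R.card
    have h3 : (1 - 2 * q) ^ R.card ≤ (1 - q) ^ (2 * R.card) := by
      rw [pow_mul]
      exact pow_le_pow_left₀ (by linarith) (by nlinarith) _
    linarith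
  calc ∫⁻ ω, ENNReal.ofReal (1 - 2 * q + h (M.X i ω) (M.X j ω)) ^ R.card ∂P
      ≤ ∫⁻ ω, (ENNReal.ofReal ((1 - q) ^ (2 * R.card)) +
        ENNReal.ofReal (R.card * (1 - q) ^ (R.card - 1)) *
          ENNReal.ofReal (h (M.X i ω) (M.X j ω))) ∂P := lintegral_mono hpt
    _ = _ := by
      rw [lintegral_add_left measurable_const, lintegral_const_mul' _ _ ENNReal.ofReal_ne_top, hE,
        lintegral_const, measure_univ, mul_one, ← ENNReal.ofReal_mul (by positivity),
        ← ENNReal.ofReal_add (by positivity) (by positivity)]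
      congr 1
      ring

/-- The vertex labels `1, …, n`. -/
def verts (n : ℕ) : Finset {i : ℕ // 1 ≤ i} := (Finset.Icc 1 n).subtype fun i => 1 ≤ i

lemma mem_verts {n : ℕ} {i : {i : ℕ // 1 ≤ i}} : i ∈ verts n ↔ (i : ℕ) ≤ n := by
  simp [verts, i.2]

lemma card_verts (n : ℕ) : (verts n).card = n := by
  rw [verts, Finset.card_subtype, Finset.filter_true_of_mem fun i hi => (Finset.mem_Icc.1 hi).1]
  simp

/-- The event that `i` has no neighbour among `1, …, n` at scale `r`. -/
def isolatedEvent (M : Model d P) (r : ℝ) (n : ℕ) (i : {i : ℕ // 1 ≤ i}) : Set Ω :=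
  {ω | ∀ k ∈ (verts n).erase i, conn M r (M.X i ω) (M.X k ω) <
    M.U (min (i : ℕ) k) (max (i : ℕ) k) ω}

lemma isolatedEvent_measurableSet (M : Model d P) (r : ℝ) (n : ℕ) (i : {i : ℕ // 1 ≤ i}) :
    MeasurableSet (isolatedEvent M r n i) := by
  have : isolatedEvent M r n i = ⋂ k ∈ (verts n).erase i,
      {ω | conn M r (M.X i ω) (M.X k ω) < M.U (min (i : ℕ) k) (max (i : ℕ) k) ω} := by
    ext; simp [isolatedEvent]
  rw [this]
  exact Finset.measurableSet_biInter _ fun k _ =>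
    measurableSet_lt (conn_measurable M r (M.X_meas _) (M.X_meas _)) (M.U_meas _ _)

lemma one_le_one_sub_mul_exp {q : ℝ} (hq : q ≤ 1 / 2) :
    1 ≤ (1 - q) * Real.exp (q * (1 + 2 * q)) := by
  have h := Real.add_one_le_exp (q * (1 + 2 * q))
  nlinarith [mul_le_mul_of_nonneg_left h (by linarith : 0 ≤ 1 - q), sq_nonneg q,
    mul_nonneg (sq_nonneg q) (by linarith : 0 ≤ 1 - 2 * q)]

/-- Upper bound for the probability that every one of the first `m` vertices has a neighbour among
the first `n` vertices. -/
lemma measure_no_isolated_le [IsProbabilityMeasure P] (M : Model d P) (r : ℝ) {m n : ℕ}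
    (hm : 1 ≤ m) (hmn : m ≤ n) (hn : 3 ≤ n) (hq : linkProb M r ≤ 1 / 2) :
    P {ω | ∀ i ∈ verts m, ω ∉ isolatedEvent M r n i} ≤
      ENNReal.ofReal (Real.exp ((n + 1) * (linkProb M r * (1 + 2 * linkProb M r))) *
        (1 / m + n * linkProb M r ^ 2) + 8 * linkProb M r) := by
  set q := linkProb M r with hqdef
  have hq0 : 0 ≤ q := linkProb_nonneg M r
  obtain ⟨k, rfl⟩ := Nat.exists_eq_add_of_le' hn
  have hx : 0 < 1 - q := by linarith
  have hmpos : (0 : ℝ) < m := by exact_mod_cast hm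
  have hmem : ∀ i ∈ verts m, i ∈ verts (k + 3) := fun i hi =>
    mem_verts.2 ((mem_verts.1 hi).trans hmn)
  have hsecond := measureReal_forall_notMem_le (P := P) (verts m) (isolatedEvent M r (k + 3))
    (isolatedEvent_measurableSet M r _) (p := (1 - q) ^ (k + 2))
    (s := (1 - q) ^ (2 * (k + 1)) + (k + 1 : ℕ) * q ^ 2 * (1 - q) ^ k)
    (by positivity) (by positivity) (Finset.card_pos.1 (by rw [card_verts]; exact hm))
    (fun i hi => by
      rw [isolatedEvent, measureReal_no_edge M r (Finset.notMem_erase i _),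
        Finset.card_erase_of_mem (hmem i hi), card_verts]
      rfl)
    (fun i hi j hj hij => by
      have hcard : (((verts (k + 3)).erase i).erase j).card = k + 1 := by
        rw [Finset.card_erase_of_mem (Finset.mem_erase.2 ⟨hij.symm, hmem j hj⟩),
          Finset.card_erase_of_mem (hmem i hi), card_verts]
        rfl
      have h := measureReal_no_edge_pair_le M r (i := i) (j := j)
        (R := ((verts (k + 3)).erase i).erase j) (by simp) (by simp) hij hq
      rw [hcard] at h
      refine le_trans (measureReal_mono ?_) h
      rintro ω ⟨hωi, hωj⟩ b hb l hl
      simp only [Finset.mem_erase] at hl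
      rcases Finset.mem_insert.1 hb with rfl | hb
      · exact hωi l (Finset.mem_erase.2 hl.2)
      · rw [Finset.mem_singleton.1 hb]
        exact hωj l (Finset.mem_erase.2 ⟨hl.1, hl.2.2⟩))
  refine hsecond.trans (ENNReal.ofReal_le_ofReal ?_)
  rw [card_verts]
  set E := Real.exp (((k + 3 : ℕ) + 1) * (q * (1 + 2 * q))) with hE
  have hEk : 1 / (1 - q) ^ (k + 4) ≤ E := by
    rw [div_le_iff₀ (by positivity)]
    have h := one_le_pow₀ (one_le_one_sub_mul_exp hq) (n := k + 4)
    rw [mul_pow, ← Real.exp_nat_mul] at h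
    rw [hE, mul_comm]
    convert h using 3
    push_cast
    ring
  have hE2 : 1 / (1 - q) ^ (k + 2) ≤ E := le_trans (one_div_le_one_div_of_le (by positivity)
    (pow_le_pow_of_le_one hx.le (by linarith) (by omega))) hEk
  have h1 : 1 / (m * (1 - q) ^ (k + 2)) ≤ E * (1 / m) := by
    rw [one_div, mul_inv, mul_comm, ← one_div, ← one_div]
    gcongr
  have h2 : ((1 - q) ^ (2 * (k + 1)) + (k + 1 : ℕ) * q ^ 2 * (1 - q) ^ k) /
      ((1 - q) ^ (k + 2)) ^ 2 = 1 / (1 - q) ^ 2 + (k + 1 : ℕ) * q ^ 2 * (1 / (1 - q) ^ (k + 4)) := by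
    field_simp
    ring
  have h3 : 1 / (1 - q) ^ 2 ≤ 1 + 8 * q := by
    rw [div_le_iff₀ (by positivity)]
    nlinarith [mul_nonneg hq0 (by linarith : 0 ≤ 1 / 2 - q), mul_nonneg hq0 (sq_nonneg (1/2 - q)),
      mul_nonneg hq0 hq0]
  have h4 : (k + 1 : ℕ) * q ^ 2 * (1 / (1 - q) ^ (k + 4)) ≤ (k + 3 : ℕ) * q ^ 2 * E := by
    gcongr
    omega
  rw [h2]
  linarith

/-- The exponential moment of a Poisson variable. -/
lemma lintegral_exp_poisson (M : Model d P) (n : ℕ) (t : ℝ) :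
    ∫⁻ ω, ENNReal.ofReal (Real.exp (t * M.N n ω)) ∂P =
      ENNReal.ofReal (Real.exp (n * (Real.exp t - 1))) := by
  have hm : Measurable fun k : ℕ => ENNReal.ofReal (Real.exp (t * k)) := measurable_from_nat
  rw [← lintegral_map hm (M.N_meas n), lintegral_countable']
  have hterm : ∀ k : ℕ, ENNReal.ofReal (Real.exp (t * k)) * (P.map (M.N n)) {k} =
      ENNReal.ofReal (Real.exp (-(n : ℝ)) * ((n * Real.exp t) ^ k / k.factorial)) := fun k => by
    rw [Measure.map_apply (M.N_meas n) (measurableSet_singleton k)]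
    have : M.N n ⁻¹' {k} = {ω | M.N n ω = k} := rfl
    rw [this, M.N_poisson, ← ENNReal.ofReal_mul (Real.exp_nonneg _), mul_pow, ← Real.exp_nat_mul]
    congr 1
    rw [mul_comm t]
    ring
  simp_rw [hterm]
  have hsum : HasSum (fun k : ℕ => (n * Real.exp t) ^ k / k.factorial)
      (Real.exp (n * Real.exp t)) := by
    rw [Real.exp_eq_exp_ℝ]
    exact NormedSpace.expSeries_div_hasSum_exp (n * NormedSpace.exp t : ℝ)
  have hsum' := hsum.mul_left (Real.exp (-(n : ℝ)))
  rw [← ENNReal.ofReal_tsum_of_nonneg (fun k => by positivity) hsum'.summable, hsum'.tsum_eq,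
    ← Real.exp_add]
  congr 2
  ring

/-- Chernoff bound for the Poisson counts. -/
lemma poisson_chernoff (M : Model d P) (n : ℕ) (t a : ℝ) :
    P {ω | a ≤ t * M.N n ω} ≤ ENNReal.ofReal (Real.exp (n * (Real.exp t - 1) - a)) := by
  have hm : Measurable fun ω => ENNReal.ofReal (Real.exp (t * M.N n ω)) :=
    (measurable_from_nat (f := fun k : ℕ => ENNReal.ofReal (Real.exp (t * k)))).comp (M.N_meas n)
  have h := meas_ge_le_lintegral_div (μ := P) hm.aemeasurable (ε := ENNReal.ofReal (Real.exp a))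
    (by simp [Real.exp_pos]) ENNReal.ofReal_ne_top
  rw [lintegral_exp_poisson, ← ENNReal.ofReal_div_of_pos (Real.exp_pos _), ← Real.exp_sub] at h
  refine le_trans (measure_mono fun ω hω => ?_) h
  exact ENNReal.ofReal_le_ofReal (Real.exp_le_exp.2 hω)

lemma ae_eventually_notMem_of_summable {s : ℕ → Set Ω} {f : ℕ → ℝ} (hf : Summable f)
    (hs : ∀ᶠ k in atTop, P (s k) ≤ ENNReal.ofReal (f k)) :
    ∀ᵐ ω ∂P, ∀ᶠ k in atTop, ω ∉ s k := by
  obtain ⟨K, hK⟩ := eventually_atTop.1 hs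
  have hsum : ∑' k, P (s (k + K)) ≠ ⊤ := by
    refine ne_top_of_le_ne_top ?_ (ENNReal.tsum_le_tsum fun k => hK (k + K) (by omega))
    exact ((summable_nat_add_iff K).2 hf).tsum_ofReal_ne_top
  filter_upwards [ae_eventually_notMem hsum] with ω hω
  rw [← map_add_atTop_eq_nat K]
  exact hω

lemma eventually_no_isolated_bound_le {γ ρ : ℝ} (hγ0 : 0 < γ) (hγ : γ < 1) (hρ : 1 < ρ)
    (hβ : γ * ρ ^ 4 < 1) :
    ∀ᶠ n : ℕ in atTop, ∀ q : ℝ, 0 ≤ q → q ≤ γ * Real.log n / n → q ≤ 1 / 2 ∧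
      Real.exp ((⌊ρ ^ 2 * n⌋₊ + 1) * (q * (1 + 2 * q))) *
        (1 / (n / 2 : ℕ) + ⌊ρ ^ 2 * n⌋₊ * q ^ 2) + 8 * q ≤
      (n : ℝ) ^ (-((1 - γ * ρ ^ 4) / 2)) := by
  set ε : ℝ := (1 - γ * ρ ^ 4) / 6 with hε
  have hε0 : 0 < ε := by rw [hε]; linarith
  have hcast := tendsto_natCast_atTop_atTop (R := ℝ)
  have hρ23 : 0 < ρ ^ 3 - ρ ^ 2 := by nlinarith [pow_pos (by linarith : 0 < ρ) 2]
  have hquot : Tendsto (fun x : ℝ => γ * Real.log x / x) atTop (nhds 0) := by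
    have h := (Real.isLittleO_log_id_atTop.tendsto_div_nhds_zero).const_mul γ
    simpa [mul_div_assoc] using h
  have hlog : ∀ᶠ x : ℝ in atTop, Real.log x ≤ x ^ ε := by
    filter_upwards [(isLittleO_log_rpow_atTop hε0).bound one_pos, eventually_ge_atTop 1]
      with x hx hx1
    rw [one_mul, Real.norm_of_nonneg (Real.log_nonneg hx1),
      Real.norm_of_nonneg (by positivity)] at hx
    exact hx
  filter_upwards [hcast.eventually (eventually_ge_atTop (1 / (ρ ^ 3 - ρ ^ 2))),
    hcast.eventually (hquot.eventually_le_const (by linarith : (0 : ℝ) < (ρ - 1) / 2)),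
    hcast.eventually (hquot.eventually_le_const (by norm_num : (0 : ℝ) < 1 / 2)),
    hcast.eventually hlog,
    hcast.eventually ((tendsto_rpow_atTop hε0).eventually_ge_atTop (11 + ρ ^ 2)),
    hcast.eventually (Real.tendsto_log_atTop.eventually_ge_atTop 1),
    eventually_ge_atTop 3] with n hn1 hn2 hn3 hn4 hn5 hn6 hn q hq0 hq
  refine ⟨hq.trans hn3, ?_⟩
  have hx3 : (3 : ℝ) ≤ n := by exact_mod_cast hn
  have hfloor : (⌊ρ ^ 2 * n⌋₊ : ℝ) ≤ ρ ^ 2 * n := Nat.floor_le (by positivity)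
  have hhalf : (n : ℝ) / 3 ≤ (n / 2 : ℕ) := by
    have : n ≤ 3 * (n / 2) := by omega
    have : (n : ℝ) ≤ 3 * (n / 2 : ℕ) := by exact_mod_cast this
    linarith
  set m : ℝ := ((n / 2 : ℕ) : ℝ)
  set f : ℝ := (⌊ρ ^ 2 * n⌋₊ : ℝ)
  set x : ℝ := (n : ℝ)
  set l := Real.log x
  have hx : 0 < x := by linarith
  have hf0 : 0 ≤ f := by positivity
  have hfρ : f + 1 ≤ ρ ^ 3 * x := by
    rw [div_le_iff₀ hρ23] at hn1; nlinarith
  have hexp : Real.exp ((f + 1) * (q * (1 + 2 * q))) ≤ x ^ (γ * ρ ^ 4) := by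
    rw [Real.rpow_def_of_pos hx, Real.exp_le_exp]
    calc (f + 1) * (q * (1 + 2 * q)) ≤ ρ ^ 3 * x * (γ * l / x * ρ) := by
          gcongr
          linarith
      _ = l * (γ * ρ ^ 4) := by field_simp
  have hone : 1 ≤ x ^ (γ * ρ ^ 4) := Real.one_le_rpow (by linarith) (by positivity)
  have hm : 1 / m ≤ 3 / x := by
    rw [div_le_div_iff₀ (by linarith) hx]; linarith
  have hql : q ≤ l / x := hq.trans (by gcongr; nlinarith)
  have hfq : f * q ^ 2 ≤ ρ ^ 2 * l ^ 2 / x :=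
    calc f * q ^ 2 ≤ ρ ^ 2 * x * (l / x) ^ 2 := by gcongr
      _ = ρ ^ 2 * l ^ 2 / x := by field_simp
  have hl2 : l ≤ l ^ 2 := by nlinarith
  calc Real.exp ((f + 1) * (q * (1 + 2 * q))) * (1 / m + f * q ^ 2) + 8 * q
      ≤ x ^ (γ * ρ ^ 4) * (3 * l ^ 2 / x + ρ ^ 2 * l ^ 2 / x)
          + x ^ (γ * ρ ^ 4) * (8 * (l ^ 2 / x)) := by
        have h1 : 1 / m ≤ 3 * l ^ 2 / x := hm.trans (by gcongr; nlinarith)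
        have h2 : 8 * q ≤ 8 * (l ^ 2 / x) := by
          have : l / x ≤ l ^ 2 / x := by gcongr
          linarith
        have h3 : 8 * (l ^ 2 / x) ≤ x ^ (γ * ρ ^ 4) * (8 * (l ^ 2 / x)) :=
          le_mul_of_one_le_left (by positivity) hone
        have h4 : Real.exp ((f + 1) * (q * (1 + 2 * q))) * (1 / m + f * q ^ 2) ≤
          x ^ (γ * ρ ^ 4) * (3 * l ^ 2 / x + ρ ^ 2 * l ^ 2 / x) := by gcongr
        linarith
    _ = (11 + ρ ^ 2) * l ^ 2 * x ^ (γ * ρ ^ 4) / x := by ring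
    _ ≤ x ^ ε * (x ^ ε) ^ 2 * x ^ (γ * ρ ^ 4) / x := by gcongr
    _ = x ^ (-((1 - γ * ρ ^ 4) / 2)) := by
        rw [← Real.rpow_natCast (x ^ ε), ← Real.rpow_mul hx.le, ← Real.rpow_add hx,
          ← Real.rpow_add hx, ← Real.rpow_sub_one hx.ne', hε]
        congr 1
        push_cast
        ring

lemma rhat_pos (M : Model d P) {γ : ℝ} (hγ0 : 0 < γ) {n : ℕ} (hn : 2 ≤ n) : 0 < rhat M γ n := by
  have h1 : (1 : ℝ) < n := by exact_mod_cast hn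
  have := Real.log_pos h1
  have := M.α_pos
  exact Real.rpow_pos_of_pos (by positivity) _

lemma linkProb_rhat_le (M : Model d P) (hd : d ≠ 0) {γ : ℝ} (hγ0 : 0 < γ) {n : ℕ} (hn : 2 ≤ n) :
    linkProb M (rhat M γ n) ≤ γ * Real.log n / n := by
  refine (linkProb_le M (rhat_pos M hγ0 hn)).trans_eq ?_
  have hα := M.α_pos
  rw [rhat, one_div, Real.rpow_inv_natCast_pow (by positivity) hd]
  field_simp

lemma rhat_le_rhat (M : Model d P) {γ : ℝ} (hγ0 : 0 < γ) {m n : ℕ} (hm : 3 ≤ m) (hmn : m ≤ n) :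
    rhat M γ n ≤ rhat M γ m := by
  have hα := M.α_pos
  have hm' : Real.exp 1 ≤ m :=
    Real.exp_one_lt_three.le.trans (by exact_mod_cast hm)
  have hmn' : (m : ℝ) ≤ n := by exact_mod_cast hmn
  have h := Real.log_div_self_antitoneOn (mem_ofPred.2 hm') (mem_ofPred.2 (hm'.trans hmn')) hmn'
  have hrw : ∀ x : ℝ, γ * Real.log x / (M.α * x) = γ / M.α * (Real.log x / x) := fun x => by
    rw [mul_div_mul_comm]
  rw [rhat, rhat, hrw, hrw]
  exact Real.rpow_le_rpow (by positivity) (by gcongr) (by positivity)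

lemma minDeg_eq_zero_of_mem_isolatedEvent (M : Model d P) {n k : ℕ} {r s : ℝ} (hr : 0 < r)
    (hrs : r ≤ s) {ω : Ω} {i : {i : ℕ // 1 ≤ i}} (hi : (i : ℕ) ≤ M.N n ω) (hk : M.N n ω ≤ k)
    (hω : ω ∈ isolatedEvent M s k i) : minDeg M n r ω = 0 := by
  refine Nat.le_zero.1 (Nat.sInf_le ⟨i, i.2, hi, ?_⟩)
  have hempty : {j : ℕ | adj M n r ω i j} = ∅ := by
    refine eq_empty_of_forall_notMem fun j hj => ?_
    obtain ⟨hij, -, hj1, -, hjN, hle⟩ := hj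
    have hlt := hω ⟨j, hj1⟩ (Finset.mem_erase.2
      ⟨fun h => hij (by simp [← h]), mem_verts.2 (hjN.trans hk)⟩)
    refine (hlt.trans_le hle).not_ge ?_
    have h0 := torusDist_nonneg (M.X i ω) (M.X j ω)
    have hs := hr.trans_le hrs
    rw [conn, max_eq_right (by positivity)]
    exact M.g_antitone (mem_Ici.2 (by positivity)) (mem_Ici.2 (by positivity)) (by gcongr)
  rw [deg, hempty, ncard_empty]

lemma summable_exp_neg_mul_pow {c : ℝ} (hc : 0 < c) {a : ℕ} (ha : a ≠ 0) :
    Summable fun k : ℕ => Real.exp (-(c * (k ^ a : ℕ))) := by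
  refine Summable.of_nonneg_of_le (fun k => (Real.exp_pos _).le) (fun k => ?_)
    (Real.summable_exp_nat_mul_iff.2 (neg_lt_zero.2 hc))
  have : (k : ℝ) ≤ (k ^ a : ℕ) := by exact_mod_cast Nat.le_self_pow ha k
  rw [Real.exp_le_exp]
  nlinarith

lemma ae_eventually_poisson_lt [IsProbabilityMeasure P] (M : Model d P) {ρ : ℝ} (hρ : 1 < ρ)
    {a : ℕ} (ha : a ≠ 0) :
    ∀ᵐ ω ∂P, ∀ᶠ k : ℕ in atTop, (M.N (k ^ a) ω : ℝ) < ρ * (k ^ a : ℕ) := by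
  have hρ0 : 0 < ρ := by linarith
  have hlog : 0 < Real.log ρ := Real.log_pos hρ
  have hc : 0 < ρ * Real.log ρ - (ρ - 1) := by
    have h := Real.log_lt_sub_one_of_pos (inv_pos.2 hρ0) (inv_lt_one_of_one_lt₀ hρ).ne
    rw [Real.log_inv] at h
    have := mul_lt_mul_of_pos_left h hρ0
    rw [mul_sub, mul_inv_cancel₀ hρ0.ne'] at this
    linarith
  have h := ae_eventually_notMem_of_summable (P := P)
    (s := fun k => {ω | Real.log ρ * (ρ * (k ^ a : ℕ)) ≤ Real.log ρ * M.N (k ^ a) ω})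
    (summable_exp_neg_mul_pow hc ha) (Eventually.of_forall fun k => by
      refine (poisson_chernoff M (k ^ a) (Real.log ρ) _).trans_eq ?_
      rw [Real.exp_log hρ0]
      congr 2
      ring)
  filter_upwards [h] with ω hω
  filter_upwards [hω] with k hk
  exact lt_of_mul_lt_mul_left (not_le.1 hk) hlog.le

lemma ae_eventually_half_lt_poisson [IsProbabilityMeasure P] (M : Model d P)
    {a : ℕ} (ha : a ≠ 0) :
    ∀ᵐ ω ∂P, ∀ᶠ k : ℕ in atTop, ((k ^ a : ℕ) : ℝ) / 2 < M.N (k ^ a) ω := by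
  have hc : 0 < 1 / 2 - Real.exp (-1) := by
    have h := Real.exp_one_gt_d9
    rw [Real.exp_neg, sub_pos, one_div]
    exact inv_strictAnti₀ two_pos (by linarith)
  have h := ae_eventually_notMem_of_summable (P := P)
    (s := fun k => {ω | -(((k ^ a : ℕ) : ℝ) / 2) ≤ -1 * M.N (k ^ a) ω})
    (summable_exp_neg_mul_pow hc ha) (Eventually.of_forall fun k => by
      refine (poisson_chernoff M (k ^ a) (-1) _).trans_eq ?_
      congr 2
      ring)
  filter_upwards [h] with ω hω
  filter_upwards [hω] with k hk
  have := not_le.1 hk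
  linarith

lemma ae_eventually_exists_isolated [IsProbabilityMeasure P] (M : Model d P) (hd : d ≠ 0)
    {γ ρ : ℝ} (hγ0 : 0 < γ) (hγ : γ < 1) (hρ : 1 < ρ) (hβ : γ * ρ ^ 4 < 1) {a : ℕ} (ha : a ≠ 0)
    (haβ : 1 < a * ((1 - γ * ρ ^ 4) / 2)) :
    ∀ᵐ ω ∂P, ∀ᶠ k : ℕ in atTop, ∃ i ∈ verts (k ^ a / 2),
      ω ∈ isolatedEvent M (rhat M γ (k ^ a)) ⌊ρ ^ 2 * (k ^ a : ℕ)⌋₊ i := by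
  have hsum : Summable fun k : ℕ => ((k ^ a : ℕ) : ℝ) ^ (-((1 - γ * ρ ^ 4) / 2)) := by
    have h := Real.summable_nat_rpow.2 (neg_lt_neg haβ)
    refine h.congr fun k => ?_
    rw [Nat.cast_pow, ← Real.rpow_natCast (k : ℝ), ← Real.rpow_mul (by positivity), mul_neg]
  have hpow : Tendsto (fun k : ℕ => k ^ a) atTop atTop := tendsto_pow_atTop ha
  have h := ae_eventually_notMem_of_summable (P := P)
    (s := fun k => {ω | ∀ i ∈ verts (k ^ a / 2),
      ω ∉ isolatedEvent M (rhat M γ (k ^ a)) ⌊ρ ^ 2 * (k ^ a : ℕ)⌋₊ i}) hsum (by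
    filter_upwards [hpow.eventually (eventually_no_isolated_bound_le hγ0 hγ hρ hβ),
      hpow.eventually (eventually_ge_atTop 3)] with k hk hk3
    obtain ⟨hq, hle⟩ := hk _ (linkProb_nonneg M _)
      (linkProb_rhat_le M hd hγ0 (Nat.le_of_succ_le hk3))
    have hfloor : k ^ a ≤ ⌊ρ ^ 2 * (k ^ a : ℕ)⌋₊ :=
      Nat.le_floor (le_mul_of_one_le_left (by positivity) (one_le_pow₀ hρ.le))
    exact (measure_no_isolated_le M _ (by omega) (by omega) (by omega) hq).trans
      (ENNReal.ofReal_le_ofReal hle))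
  filter_upwards [h] with ω hω
  filter_upwards [hω] with k hk
  simpa using hk

lemma eventually_succ_pow_le {ρ : ℝ} (hρ : 1 < ρ) (a : ℕ) :
    ∀ᶠ k : ℕ in atTop, (((k + 1) ^ a : ℕ) : ℝ) ≤ ρ * (k ^ a : ℕ) := by
  have h : Tendsto (fun k : ℕ => (1 + 1 / (k : ℝ)) ^ a) atTop (nhds 1) := by
    simpa using ((tendsto_one_div_atTop_nhds_zero_nat (𝕜 := ℝ)).const_add 1).pow a
  filter_upwards [h.eventually_le_const hρ, eventually_gt_atTop 0] with k hk hk0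
  have hk0' : (0 : ℝ) < k := by exact_mod_cast hk0
  push_cast
  calc ((k : ℝ) + 1) ^ a = (1 + 1 / (k : ℝ)) ^ a * k ^ a := by
        rw [← mul_pow]; field_simp
    _ ≤ ρ * k ^ a := by gcongr

/-- Theorem 4(i): for `γ < 1`, a.s. `δ_n → 0`. -/
theorem minDeg_tendsto_zero (hd : 2 ≤ d) [IsProbabilityMeasure P] (M : Model d P)
    {c : ℝ} (hc : 0 < c)
    (hg : M.g =o[atTop] fun r : ℝ => Real.exp (-(c * r)))
    {γ : ℝ} (hγ0 : 0 < γ) (hγ : γ < 1) :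
    ∀ᵐ ω ∂P, Tendsto
      (fun n : ℕ => (minDeg M n (rhat M γ n) ω : ℝ)) atTop (nhds 0) := by
  obtain ⟨ρ, hρ, hβ⟩ : ∃ ρ : ℝ, 1 < ρ ∧ γ * ρ ^ 4 < 1 := by
    have hcont : Tendsto (fun ρ : ℝ => γ * ρ ^ 4) (nhdsWithin 1 (Ioi 1)) (nhds γ) := by
      have : Continuous fun ρ : ℝ => γ * ρ ^ 4 := by fun_prop
      simpa using (this.tendsto 1).mono_left nhdsWithin_le_nhds
    obtain ⟨ρ, hlt, hρ⟩ := ((hcont.eventually_lt_const hγ).and self_mem_nhdsWithin).exists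
    exact ⟨ρ, hρ, hlt⟩
  obtain ⟨a, ha⟩ := exists_nat_gt (1 / ((1 - γ * ρ ^ 4) / 2))
  have hδ : 0 < (1 - γ * ρ ^ 4) / 2 := by linarith
  have haβ : 1 < a * ((1 - γ * ρ ^ 4) / 2) := (div_lt_iff₀ hδ).1 ha
  have ha0 : a ≠ 0 := by
    rintro rfl
    norm_num at haβ
  filter_upwards [ae_eventually_poisson_lt M hρ ha0, ae_eventually_half_lt_poisson M ha0,
    ae_eventually_exists_isolated M (by omega) hγ0 hγ hρ hβ ha0 haβ] with ω hupper hlower hiso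
  obtain ⟨K, hK⟩ := eventually_atTop.1
    (hupper.and (hlower.and (hiso.and (eventually_succ_pow_le hρ a))))
  refine tendsto_const_nhds.congr' ?_
  filter_upwards [eventually_ge_atTop ((K + 3) ^ a)] with n hn
  have hlt : n < (a.nthRoot n + 1) ^ a := Nat.lt_pow_nthRoot_add_one ha0 n
  have hle : a.nthRoot n ^ a ≤ n := Nat.pow_nthRoot_le (.inl ha0)
  set k := a.nthRoot n
  have hk : K + 3 ≤ k := Nat.lt_succ_iff.1 (lt_of_pow_lt_pow_left₀ a (Nat.zero_le _)
    (hn.trans_lt hlt))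
  obtain ⟨-, hlow, ⟨i, hi, hmem⟩, hsucc⟩ := hK k (by omega)
  have hup := (hK (k + 1) (by omega)).1
  have hk3 : 3 ≤ k ^ a := le_trans (by omega) (Nat.le_self_pow ha0 k)
  have hiN : (i : ℕ) ≤ M.N n ω := by
    have h1 : (i : ℝ) ≤ ((k ^ a : ℕ) : ℝ) / 2 :=
      (Nat.cast_le.2 (mem_verts.1 hi)).trans Nat.cast_div_le
    have h2 : (i : ℕ) < M.N (k ^ a) ω := by exact_mod_cast h1.trans_lt hlow
    exact h2.le.trans (M.N_mono ω hle)
  have hNfloor : M.N n ω ≤ ⌊ρ ^ 2 * (k ^ a : ℕ)⌋₊ := by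
    refine Nat.le_floor ?_
    have h1 : (M.N n ω : ℝ) ≤ M.N ((k + 1) ^ a) ω := by exact_mod_cast M.N_mono ω hlt.le
    have h2 := mul_le_mul_of_nonneg_left hsucc (by linarith : 0 ≤ ρ)
    linarith
  rw [minDeg_eq_zero_of_mem_isolatedEvent M (rhat_pos M hγ0 (by omega))
    (rhat_le_rhat M hγ0 hk3 hle) hiN hNfloor hmem, Nat.cast_zero]

end RCM
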